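/- Let s be a labelled transition system and i_e an input-enabled transition system such that s and i_e are composable, and let σ ∈ (L_{s∥i_e}^δ)*. If σ↾L_s^δ ∈ Utraces(s) and σ↾L_{i_e}^δ ∈ Utraces(i_e), then σ ∈ Utraces(s ∥ i_e). -/

import Mathlib

/-- Labels extended with the quiescence label `δ`. -/
inductive ELabel (Lab : Type) : Type
  | lab : Lab → ELabel Lab
  | delta : ELabel Lab

namespace ELabel

/-- Membership of an extended label in `𝓛^δ = 𝓛 ∪ {δ}`. -/
def inL {Lab : Type} (Ls : Set Lab) : ELabel Lab → Prop
  | lab ℓ => ℓ ∈ Ls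
  | delta => True

end ELabel

/-- A trace lies in `(𝓛^δ)*`. -/
def TraceIn {Lab : Type} (Ls : Set Lab) (σ : List (ELabel Lab)) : Prop :=
  ∀ x ∈ σ, ELabel.inL Ls x

/-- A labelled transition system.  `T q none q'` is an internal `τ`-step,
`T q (some ℓ) q'` is a step labelled `ℓ`. -/
structure LTS (Q : Type) (Lab : Type) where
  I : Set Lab
  U : Set Lab
  T : Q → Option Lab → Q → Prop
  q0 : Q

namespace LTS

variable {Q Lab : Type}

/-- The label set `L = I ∪ U`. -/
def L (M : LTS Q Lab) : Set Lab := M.I ∪ M.U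

/-- Standing assumptions on all LTSs: countable, disjoint input/output label
sets, transitions labelled within `L`, strong convergence (no infinite
`τ`-sequences), and image-finiteness. -/
def WellFormed (M : LTS Q Lab) : Prop :=
  M.I.Countable ∧ M.U.Countable ∧ Disjoint M.I M.U ∧
  (∀ q ℓ q', M.T q (some ℓ) q' → ℓ ∈ M.L) ∧
  (¬ ∃ f : ℕ → Q, ∀ n, M.T (f n) none (f (n + 1))) ∧
  (∀ q a, {q' | M.T q a q'}.Finite)

/-- A state is quiescent if neither an output nor `τ` is enabled in it. -/
def Quiescent (M : LTS Q Lab) (q : Q) : Prop :=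
  (∀ x ∈ M.U, ∀ q', ¬ M.T q (some x) q') ∧ ∀ q', ¬ M.T q none q'

/-- A single visible step `q --x--> q'` for `x ∈ L^δ`, where the quiescence
label `δ` gives a self-loop at quiescent states. -/
def VStep (M : LTS Q Lab) (q : Q) : ELabel Lab → Q → Prop
  | .lab ℓ, q' => M.T q (some ℓ) q'
  | .delta, q' => q' = q ∧ M.Quiescent q

/-- Zero or more `τ`-steps: `q ==ε==> q'`. -/
def Eps (M : LTS Q Lab) : Q → Q → Prop :=
  Relation.ReflTransGen fun a b => M.T a none b

/-- Weak transition `q ==σ==> q'` for `σ ∈ (L^δ)*`. -/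
inductive W (M : LTS Q Lab) : Q → List (ELabel Lab) → Q → Prop
  | nil {q q' : Q} : M.Eps q q' → W M q [] q'
  | snoc {q q1 q2 q' : Q} {σ : List (ELabel Lab)} {x : ELabel Lab} :
      W M q σ q1 → M.VStep q1 x q2 → M.Eps q2 q' → W M q (σ ++ [x]) q'

/-- `X after σ`, for a set of states `X`. -/
def afterSet (M : LTS Q Lab) (X : Set Q) (σ : List (ELabel Lab)) : Set Q :=
  {q' | ∃ q ∈ X, M.W q σ q'}

/-- `M after σ`, from the initial state. -/
def after (M : LTS Q Lab) (σ : List (ELabel Lab)) : Set Q :=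
  {q' | M.W M.q0 σ q'}

/-- The predicate underlying `out(q) ⊆ U ∪ {δ}`. -/
def outLabel (M : LTS Q Lab) (q : Q) : ELabel Lab → Prop
  | .lab ℓ => ℓ ∈ M.U ∧ ∃ q', M.T q (some ℓ) q'
  | .delta => M.Quiescent q

/-- `out(q)`. -/
def outq (M : LTS Q Lab) (q : Q) : Set (ELabel Lab) :=
  {x | M.outLabel q x}

/-- `in(q) = {ℓ ∈ I | q ==ℓ==>}`. -/
def inq (M : LTS Q Lab) (q : Q) : Set Lab :=
  {ℓ | ℓ ∈ M.I ∧ ∃ q', M.W q [ELabel.lab ℓ] q'}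

/-- `out(X) = ⋃_{q ∈ X} out(q)`. -/
def outSet (M : LTS Q Lab) (X : Set Q) : Set (ELabel Lab) :=
  ⋃ q ∈ X, M.outq q

/-- `in(X) = ⋂_{q ∈ X} in(q)`. -/
def inSet (M : LTS Q Lab) (X : Set Q) : Set Lab :=
  ⋂ q ∈ X, M.inq q

/-- Input-enabledness: `M` is an IOTS. -/
def InputEnabled (M : LTS Q Lab) : Prop :=
  ∀ q, ∀ ℓ ∈ M.I, ∃ q', M.W q [ELabel.lab ℓ] q'

/-- `Utraces(M)`. -/
def Utraces (M : LTS Q Lab) : Set (List (ELabel Lab)) :=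
  {σ | TraceIn M.L σ ∧ (∃ q', M.W M.q0 σ q') ∧
    ∀ σ1 ℓ σ2, σ = σ1 ++ ELabel.lab ℓ :: σ2 → ℓ ∈ M.I →
      ∀ q, M.W M.q0 σ1 q → ∃ q', M.W q [ELabel.lab ℓ] q'}

/-- An LTS is utrace-closed when every trace over `(L^δ)*` that it can
perform is a utrace. -/
def UtraceClosed (M : LTS Q Lab) : Prop :=
  ∀ σ : List (ELabel Lab), TraceIn M.L σ → (∃ q', M.W M.q0 σ q') → σ ∈ M.Utraces

end LTS

/-- `i uioco s`. -/
def Uioco {Qi Qs Lab : Type} (i : LTS Qi Lab) (s : LTS Qs Lab) : Prop :=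
  ∀ σ ∈ s.Utraces, i.outSet (i.after σ) ⊆ s.outSet (s.after σ)

/-- Composability: disjoint output label sets. -/
def Composable {Qs Qe Lab : Type} (s : LTS Qs Lab) (e : LTS Qe Lab) : Prop :=
  s.U ∩ e.U = ∅

/-- Parallel composition `s ∥ e`. -/
def par {Qs Qe Lab : Type} (s : LTS Qs Lab) (e : LTS Qe Lab) : LTS (Qs × Qe) Lab where
  I := (s.I \ e.U) ∪ (e.I \ s.U)
  U := s.U ∪ e.U
  T := fun p a p' =>
    match a with
    | none =>
        (s.T p.1 none p'.1 ∧ p'.2 = p.2) ∨ (e.T p.2 none p'.2 ∧ p'.1 = p.1)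
    | some ℓ =>
        (ℓ ∈ s.L ∧ ℓ ∉ e.L ∧ s.T p.1 (some ℓ) p'.1 ∧ p'.2 = p.2) ∨
        (ℓ ∈ e.L ∧ ℓ ∉ s.L ∧ e.T p.2 (some ℓ) p'.2 ∧ p'.1 = p.1) ∨
        (ℓ ∈ s.L ∧ ℓ ∈ e.L ∧ s.T p.1 (some ℓ) p'.1 ∧ e.T p.2 (some ℓ) p'.2)
  q0 := (s.q0, e.q0)

/-- `s accepts e`: along utraces of `s ∥ e`, every output of `e` that is an
input of `s` is (weakly) enabled in `s`. -/
def Accepts {Qs Qe Lab : Type} (s : LTS Qs Lab) (e : LTS Qe Lab) : Prop :=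
  ∀ σ ∈ (par s e).Utraces, ∀ qs qe, (par s e).W (par s e).q0 σ (qs, qe) →
    ∀ ℓ, ELabel.lab ℓ ∈ e.outq qe → ℓ ∈ s.I → ℓ ∈ s.inq qs

/-- `s mutually accepts e`. -/
def MutuallyAccepts {Qs Qe Lab : Type} (s : LTS Qs Lab) (e : LTS Qe Lab) : Prop :=
  Accepts s e ∧ Accepts e s

/-- `R` is an ecosim for `s` and `e`. -/
def IsEcosim {Qs Qe Lab : Type} (s : LTS Qs Lab) (e : LTS Qe Lab)
    (R : Set (Set Qs × Set Qe)) : Prop :=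
  (s.after [], e.after []) ∈ R ∧
  ∀ Xs Xe, (Xs, Xe) ∈ R →
    (∀ ℓ, ELabel.lab ℓ ∈ e.outSet Xe → ℓ ∈ s.I →
      ℓ ∈ s.inSet Xs ∧
        (s.afterSet Xs [ELabel.lab ℓ], e.afterSet Xe [ELabel.lab ℓ]) ∈ R) ∧
    (∀ ℓ, ELabel.lab ℓ ∈ s.outSet Xs → ℓ ∈ e.I →
      ℓ ∈ e.inSet Xe ∧
        (s.afterSet Xs [ELabel.lab ℓ], e.afterSet Xe [ELabel.lab ℓ]) ∈ R) ∧
    (∀ ℓ, (ELabel.lab ℓ ∈ e.outSet Xe ∨ ℓ ∈ e.inSet Xe) → ℓ ∉ s.L →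
      (Xs, e.afterSet Xe [ELabel.lab ℓ]) ∈ R) ∧
    (∀ ℓ, (ELabel.lab ℓ ∈ s.outSet Xs ∨ ℓ ∈ s.inSet Xs) → ℓ ∉ e.L →
      (s.afterSet Xs [ELabel.lab ℓ], Xe) ∈ R) ∧
    (∀ ℓ, ℓ ∈ s.inSet Xs → ℓ ∈ e.inSet Xe →
      (s.afterSet Xs [ELabel.lab ℓ], e.afterSet Xe [ELabel.lab ℓ]) ∈ R) ∧
    (ELabel.delta ∈ s.outSet Xs → ELabel.delta ∈ e.outSet Xe →
      (s.afterSet Xs [ELabel.delta], e.afterSet Xe [ELabel.delta]) ∈ R)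

/-- `s eco e`: there exists an ecosim for `s` and `e`. -/
def Eco {Qs Qe Lab : Type} (s : LTS Qs Lab) (e : LTS Qe Lab) : Prop :=
  ∃ R, IsEcosim s e R

/-- `R_U(s,e)`: the smallest relation closed under the given rules. -/
inductive RU {Qs Qe Lab : Type} (s : LTS Qs Lab) (e : LTS Qe Lab) :
    Set Qs → Set Qe → Prop
  | base : RU s e (s.after []) (e.after [])
  | syncOutE {Xs : Set Qs} {Xe : Set Qe} (ℓ : Lab) :
      RU s e Xs Xe → ELabel.lab ℓ ∈ e.outSet Xe → ℓ ∈ s.I →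
      RU s e (s.afterSet Xs [ELabel.lab ℓ]) (e.afterSet Xe [ELabel.lab ℓ])
  | syncOutS {Xs : Set Qs} {Xe : Set Qe} (ℓ : Lab) :
      RU s e Xs Xe → ELabel.lab ℓ ∈ s.outSet Xs → ℓ ∈ e.I →
      RU s e (s.afterSet Xs [ELabel.lab ℓ]) (e.afterSet Xe [ELabel.lab ℓ])
  | internalE {Xs : Set Qs} {Xe : Set Qe} (ℓ : Lab) :
      RU s e Xs Xe → (ELabel.lab ℓ ∈ e.outSet Xe ∨ ℓ ∈ e.inSet Xe) → ℓ ∉ s.L →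
      RU s e Xs (e.afterSet Xe [ELabel.lab ℓ])
  | internalS {Xs : Set Qs} {Xe : Set Qe} (ℓ : Lab) :
      RU s e Xs Xe → (ELabel.lab ℓ ∈ s.outSet Xs ∨ ℓ ∈ s.inSet Xs) → ℓ ∉ e.L →
      RU s e (s.afterSet Xs [ELabel.lab ℓ]) Xe
  | syncIn {Xs : Set Qs} {Xe : Set Qe} (ℓ : Lab) :
      RU s e Xs Xe → ℓ ∈ s.inSet Xs → ℓ ∈ e.inSet Xe →
      RU s e (s.afterSet Xs [ELabel.lab ℓ]) (e.afterSet Xe [ELabel.lab ℓ])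
  | qdelta {Xs : Set Qs} {Xe : Set Qe} :
      RU s e Xs Xe → ELabel.delta ∈ s.outSet Xs → ELabel.delta ∈ e.outSet Xe →
      RU s e (s.afterSet Xs [ELabel.delta]) (e.afterSet Xe [ELabel.delta])

open Classical in
/-- Projection `σ↾𝓛^δ` of a trace onto an (extended) label set: keeps `δ`
and the labels in `Ls`, removes all other labels. -/
noncomputable def projD {Lab : Type} (σ : List (ELabel Lab)) (Ls : Set Lab) :
    List (ELabel Lab) :=
  σ.filter fun x => decide (ELabel.inL Ls x)

open Classical in
/-- Projection `σ↾𝓛` of a trace of plain labels onto a label set. -/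
noncomputable def projL {Lab : Type} (σ : List Lab) (Ls : Set Lab) : List Lab :=
  σ.filter fun ℓ => decide (ℓ ∈ Ls)

open Classical in
/-- Substitution `σ[θ/δ]` of the label `θ` by the quiescence label `δ`. -/
noncomputable def substTheta {Lab : Type} (θ : Lab) (σ : List Lab) :
    List (ELabel Lab) :=
  σ.map fun ℓ => if ℓ = θ then ELabel.delta else ELabel.lab ℓ

/-- `⟨X⟩`: componentwise collection of a set of pairs of states. -/
def collect {Qs Qe : Type} (X : Set (Qs × Qe)) : Set Qs × Set Qe :=
  (Prod.fst '' X, Prod.snd '' X)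

/-- `q_s accepts q_e over σ`. -/
def AcceptsOver {Qs Qe Lab : Type} (s : LTS Qs Lab) (e : LTS Qe Lab)
    (qs : Qs) (qe : Qe) (σ : List (ELabel Lab)) : Prop :=
  ∀ σ1 σ2 : List (ELabel Lab), σ1 ++ σ2 = σ →
    ∀ (qs' : Qs) (qe' : Qe), (par s e).W (qs, qe) σ1 (qs', qe') →
      ∀ ℓ, ELabel.lab ℓ ∈ e.outq qe' → ℓ ∈ s.I → ℓ ∈ s.inq qs' ∧ ℓ ∈ e.U

/-- `q_s mutually accepts q_e over σ`. -/
def MutuallyAcceptsOver {Qs Qe Lab : Type} (s : LTS Qs Lab) (e : LTS Qe Lab)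
    (qs : Qs) (qe : Qe) (σ : List (ELabel Lab)) : Prop :=
  AcceptsOver s e qs qe σ ∧ AcceptsOver e s qe qs σ

/-- A test case: a quasi-finite tree-shaped LTS without `τ`-transitions, with
terminal states `pass` and `fail` carrying input self-loops, a special
quiescence-observation input `θ`, at most one output transition per state,
and receptive to all inputs other than `θ`. -/
structure TestCase (Qt Lab : Type) extends LTS Qt Lab where
  passS : Qt
  failS : Qt
  theta : Lab
  theta_input : theta ∈ I
  no_tau : ∀ q q', ¬ T q none q'
  tree : ∀ q, q ≠ q0 → q ≠ passS → q ≠ failS →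
    ∃! p : Qt × Option Lab, T p.1 p.2 q
  pass_loops : ∀ ℓ ∈ I, T passS (some ℓ) passS
  pass_terminal : ∀ a q', T passS a q' → q' = passS ∧ ∃ ℓ ∈ I, a = some ℓ
  fail_loops : ∀ ℓ ∈ I, T failS (some ℓ) failS
  fail_terminal : ∀ a q', T failS a q' → q' = failS ∧ ∃ ℓ ∈ I, a = some ℓ
  one_output : ∀ q ℓ ℓ' q' q'', ℓ ∈ U → ℓ' ∈ U →
    T q (some ℓ) q' → T q (some ℓ') q'' → ℓ = ℓ' ∧ q' = q''
  receptive : ∀ q, ∀ ℓ ∈ I, ℓ ≠ theta → ∃ q', T q (some ℓ) q'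

/-- Test execution `t ⫿ i` of a test case `t` with an implementation `i`. -/
def testExec {Qt Qi Lab : Type} (t : TestCase Qt Lab) (i : LTS Qi Lab) :
    LTS (Qt × Qi) Lab where
  I := ∅
  U := i.U ∪ (t.toLTS.L \ {t.theta})
  T := fun p a p' =>
    match a with
    | none => i.T p.2 none p'.2 ∧ p'.1 = p.1
    | some ℓ =>
        (ℓ ∈ i.L ∧ ℓ ∉ t.toLTS.L ∧ i.T p.2 (some ℓ) p'.2 ∧ p'.1 = p.1) ∨
        (ℓ ∈ t.toLTS.L ∧ ℓ ∉ i.L ∧ ℓ ≠ t.theta ∧ t.T p.1 (some ℓ) p'.1 ∧ p'.2 = p.2) ∨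
        (ℓ ∈ i.L ∧ ℓ ∈ t.toLTS.L ∧ t.T p.1 (some ℓ) p'.1 ∧ i.T p.2 (some ℓ) p'.2) ∨
        (ℓ = t.theta ∧ t.T p.1 (some ℓ) p'.1 ∧ p'.2 = p.2 ∧ i.Quiescent p.2)
  q0 := (t.q0, i.q0)

/-!
Working one label at a time, weak transitions of `s` and `e` over the projections of a trace merge
into a weak transition of `s ∥ e`, and weak transitions of `s ∥ e` project back to `s`. In the
second direction only `δ` is delicate: `s ∥ e` might be quiescent because `e` blocks an output
of `s`. Composability makes such an output an input of `e`, which `e` accepts after some `τ`-steps,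
and a quiescent composition leaves no `τ`-steps to make. Hence every state of `s ∥ e` after a prefix
`σ₁` projects to a state of `s` after the projection of `σ₁`, where the next input is enabled by
hypothesis, and input-enabledness of `e` supplies the other half of the joint input step.
-/

section Traces

variable {Lab : Type} {Ls : Set Lab} {x : ELabel Lab}

theorem traceIn_append {σ τ : List (ELabel Lab)} :
    TraceIn Ls (σ ++ τ) ↔ TraceIn Ls σ ∧ TraceIn Ls τ :=
  List.forall_mem_append

theorem traceIn_singleton : TraceIn Ls [x] ↔ x.inL Ls :=
  List.forall_mem_singleton

theorem projD_append (σ τ : List (ELabel Lab)) (Ls : Set Lab) :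
    projD (σ ++ τ) Ls = projD σ Ls ++ projD τ Ls :=
  List.filter_append _ _

theorem projD_cons_of_inL (hx : x.inL Ls) (σ : List (ELabel Lab)) :
    projD (x :: σ) Ls = x :: projD σ Ls := by
  simp [projD, hx]

theorem projD_singleton_of_inL (hx : x.inL Ls) : projD [x] Ls = [x] :=
  projD_cons_of_inL hx []

theorem projD_singleton_of_not_inL (hx : ¬ x.inL Ls) : projD [x] Ls = [] := by
  simp [projD, hx]

end Traces

namespace LTS

section WeakTransitions

variable {Q Lab : Type} {M : LTS Q Lab} {q q' : Q} {σ τ : List (ELabel Lab)} {x : ELabel Lab}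

theorem w_nil : M.W q [] q' ↔ M.Eps q q' := by
  refine ⟨fun h => ?_, .nil⟩
  generalize hσ : ([] : List (ELabel Lab)) = σ at h
  cases h with
  | nil h => exact h
  | snoc => simp at hσ

theorem w_append_singleton :
    M.W q (σ ++ [x]) q' ↔ ∃ q₁ q₂, M.W q σ q₁ ∧ M.VStep q₁ x q₂ ∧ M.Eps q₂ q' := by
  refine ⟨fun h => ?_, fun ⟨_, _, h₁, hx, h₂⟩ => .snoc h₁ hx h₂⟩
  generalize hρ : σ ++ [x] = ρ at h
  cases h with
  | nil => simp at hρ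
  | snoc h₁ hx h₂ =>
    obtain ⟨rfl, rfl⟩ := List.append_singleton_inj.mp hρ
    exact ⟨_, _, h₁, hx, h₂⟩

theorem w_singleton :
    M.W q [x] q' ↔ ∃ q₁ q₂, M.Eps q q₁ ∧ M.VStep q₁ x q₂ ∧ M.Eps q₂ q' := by
  simpa only [List.nil_append, w_nil] using w_append_singleton (M := M) (σ := [])

theorem W.trans_eps {q₁ : Q} (h : M.W q σ q₁) (hε : M.Eps q₁ q') : M.W q σ q' := by
  cases h with
  | nil h => exact .nil (h.trans hε)
  | snoc h hx h' => exact .snoc h hx (h'.trans hε)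

theorem w_append : M.W q (σ ++ τ) q' ↔ ∃ q₁, M.W q σ q₁ ∧ M.W q₁ τ q' := by
  induction τ using List.reverseRecOn generalizing q' with
  | nil =>
    simp only [List.append_nil, w_nil]
    exact ⟨fun h => ⟨q', h, .refl⟩, fun ⟨_, h, hε⟩ => h.trans_eps hε⟩
  | append_singleton τ x ih =>
    simp only [← List.append_assoc, w_append_singleton, ih]
    grind

theorem InputEnabled.exists_step (hM : M.InputEnabled) (hτ : ∀ q', ¬ M.T q none q')
    {ℓ : Lab} (hℓ : ℓ ∈ M.I) : ∃ q', M.T q (some ℓ) q' := by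
  obtain ⟨_, hw⟩ := hM q ℓ hℓ
  obtain ⟨q₁, q₂, hε, hstep, -⟩ := w_singleton.mp hw
  obtain rfl | ⟨_, hτ', -⟩ := hε.cases_head
  · exact ⟨q₂, hstep⟩
  · exact absurd hτ' (hτ _)

theorem exists_w_projD_singleton {Ls : Set Lab} {ℓ : Lab}
    (h : ℓ ∈ Ls → ∃ q', M.W q [.lab ℓ] q') : ∃ q', M.W q (projD [.lab ℓ] Ls) q' := by
  by_cases hℓ : ℓ ∈ Ls
  · rw [projD_singleton_of_inL (x := .lab ℓ) hℓ]
    exact h hℓ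
  · rw [projD_singleton_of_not_inL (x := .lab ℓ) hℓ]
    exact ⟨q, .nil .refl⟩

theorem exists_w_of_projD_mem_utraces {ℓ : Lab}
    (h : projD (σ ++ .lab ℓ :: τ) M.L ∈ M.Utraces) (hℓ : ℓ ∈ M.I)
    (hq : M.W M.q0 (projD σ M.L) q) : ∃ q', M.W q [.lab ℓ] q' := by
  refine h.2.2 (projD σ M.L) ℓ (projD τ M.L) ?_ hℓ q hq
  have hℓL : ELabel.inL M.L (.lab ℓ) := Or.inl hℓ
  rw [projD_append, projD_cons_of_inL hℓL]

end WeakTransitions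

section Par

variable {Qs Qe Lab : Type} {s : LTS Qs Lab} {e : LTS Qe Lab}
  {a a' : Qs} {b b' : Qe} {p p' : Qs × Qe} {σ : List (ELabel Lab)} {x : ELabel Lab} {ℓ : Lab}

theorem mem_par_L : ℓ ∈ (par s e).L ↔ ℓ ∈ s.L ∨ ℓ ∈ e.L := by
  simp only [L, par, Set.mem_union, Set.mem_sdiff]
  tauto

theorem mem_I_left_of_mem_par_I (h : ℓ ∈ (par s e).I) (hℓ : ℓ ∈ s.L) : ℓ ∈ s.I :=
  h.elim And.left fun h => hℓ.resolve_right h.2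

theorem mem_I_right_of_mem_par_I (h : ℓ ∈ (par s e).I) (hℓ : ℓ ∈ e.L) : ℓ ∈ e.I :=
  h.elim (fun h => hℓ.resolve_right h.2) And.left

theorem eps_par (ha : s.Eps a a') (hb : e.Eps b b') : (par s e).Eps (a, b) (a', b') := by
  have hleft : (par s e).Eps (a, b) (a', b) :=
    Relation.ReflTransGen.lift (·, b) (fun _ _ hτ => Or.inl ⟨hτ, rfl⟩) _ _ ha
  have hright : (par s e).Eps (a', b) (a', b') :=
    Relation.ReflTransGen.lift (a', ·) (fun _ _ hτ => Or.inr ⟨hτ, rfl⟩) _ _ hb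
  exact hleft.trans hright

theorem eps_fst_of_par (h : (par s e).Eps p p') : s.Eps p.1 p'.1 := by
  refine Relation.ReflTransGen.lift' Prod.fst (fun p p' hτ => ?_) p p' h
  rcases hτ with ⟨hτ, -⟩ | ⟨-, heq⟩
  · exact .single hτ
  · rw [Function.onFun, heq]

theorem quiescent_par (ha : s.Quiescent a) (hb : e.Quiescent b) :
    (par s e).Quiescent (a, b) := by
  constructor
  · rintro ℓ (hℓ | hℓ) q' (⟨-, he, hstep, -⟩ | ⟨-, hs, hstep, -⟩ | ⟨-, -, hstep, hstep'⟩)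
    · exact ha.1 ℓ hℓ _ hstep
    · exact hs (Or.inr hℓ)
    · exact ha.1 ℓ hℓ _ hstep
    · exact he (Or.inr hℓ)
    · exact hb.1 ℓ hℓ _ hstep
    · exact hb.1 ℓ hℓ _ hstep'
  · rintro q' (⟨hτ, -⟩ | ⟨hτ, -⟩)
    · exact ha.2 _ hτ
    · exact hb.2 _ hτ

theorem quiescent_fst_of_par (he : e.InputEnabled) (hcomp : Composable s e)
    (h : (par s e).Quiescent p) : s.Quiescent p.1 := by
  refine ⟨fun ℓ hℓ a hstep => ?_, fun a hτ => h.2 (a, p.2) (Or.inl ⟨hτ, rfl⟩)⟩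
  by_cases hℓe : ℓ ∈ e.L
  · have hℓI : ℓ ∈ e.I :=
      hℓe.resolve_right (Set.disjoint_left.mp (Set.disjoint_iff_inter_eq_empty.mpr hcomp) hℓ)
    have hτe : ∀ b, ¬ e.T p.2 none b := fun b hτ => h.2 (p.1, b) (Or.inr ⟨hτ, rfl⟩)
    obtain ⟨b, hstep'⟩ := he.exists_step hτe hℓI
    exact h.1 ℓ (Or.inl hℓ) (a, b) (Or.inr (Or.inr ⟨Or.inr hℓ, hℓe, hstep, hstep'⟩))
  · exact h.1 ℓ (Or.inl hℓ) (a, p.2) (Or.inl ⟨Or.inr hℓ, hℓe, hstep, rfl⟩)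

theorem w_par_singleton (hx : x.inL (par s e).L) (ha : s.W a (projD [x] s.L) a')
    (hb : e.W b (projD [x] e.L) b') : (par s e).W (a, b) [x] (a', b') := by
  by_cases hxs : x.inL s.L <;> by_cases hxe : x.inL e.L
  · rw [projD_singleton_of_inL hxs, w_singleton] at ha
    rw [projD_singleton_of_inL hxe, w_singleton] at hb
    obtain ⟨a₁, a₂, ha₁, hstepa, ha₂⟩ := ha
    obtain ⟨b₁, b₂, hb₁, hstepb, hb₂⟩ := hb
    refine w_singleton.mpr ⟨(a₁, b₁), (a₂, b₂), eps_par ha₁ hb₁, ?_, eps_par ha₂ hb₂⟩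
    cases x with
    | lab ℓ => exact Or.inr (Or.inr ⟨hxs, hxe, hstepa, hstepb⟩)
    | delta => exact ⟨Prod.ext hstepa.1 hstepb.1, quiescent_par hstepa.2 hstepb.2⟩
  · rw [projD_singleton_of_inL hxs, w_singleton] at ha
    rw [projD_singleton_of_not_inL hxe, w_nil] at hb
    obtain ⟨a₁, a₂, ha₁, hstep, ha₂⟩ := ha
    refine w_singleton.mpr ⟨(a₁, b'), (a₂, b'), eps_par ha₁ hb, ?_, eps_par ha₂ .refl⟩
    cases x with
    | lab ℓ => exact Or.inl ⟨hxs, hxe, hstep, rfl⟩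
    | delta => exact absurd trivial hxe
  · rw [projD_singleton_of_not_inL hxs, w_nil] at ha
    rw [projD_singleton_of_inL hxe, w_singleton] at hb
    obtain ⟨b₁, b₂, hb₁, hstep, hb₂⟩ := hb
    refine w_singleton.mpr ⟨(a', b₁), (a', b₂), eps_par ha hb₁, ?_, eps_par .refl hb₂⟩
    cases x with
    | lab ℓ => exact Or.inr (Or.inl ⟨hxe, hxs, hstep, rfl⟩)
    | delta => exact absurd trivial hxs
  · cases x with
    | lab ℓ => exact ((mem_par_L.mp hx).elim hxs hxe).elim
    | delta => exact absurd trivial hxs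

theorem w_par (hσ : TraceIn (par s e).L σ) (ha : s.W a (projD σ s.L) a')
    (hb : e.W b (projD σ e.L) b') : (par s e).W (a, b) σ (a', b') := by
  induction σ using List.reverseRecOn generalizing a' b' with
  | nil => exact .nil (eps_par (w_nil.mp ha) (w_nil.mp hb))
  | append_singleton σ x ih =>
    rw [traceIn_append, traceIn_singleton] at hσ
    rw [projD_append, w_append] at ha hb
    obtain ⟨a₁, ha₁, ha₂⟩ := ha
    obtain ⟨b₁, hb₁, hb₂⟩ := hb
    exact w_append.mpr ⟨(a₁, b₁), ih hσ.1 ha₁ hb₁, w_par_singleton hσ.2 ha₂ hb₂⟩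

theorem w_fst_of_par_singleton (he : e.InputEnabled) (hcomp : Composable s e)
    (h : (par s e).W p [x] p') : s.W p.1 (projD [x] s.L) p'.1 := by
  obtain ⟨p₁, p₂, hε₁, hstep, hε₂⟩ := w_singleton.mp h
  replace hε₁ := eps_fst_of_par hε₁
  replace hε₂ := eps_fst_of_par hε₂
  suffices (x.inL s.L ∧ s.VStep p₁.1 x p₂.1) ∨ (¬ x.inL s.L ∧ p₂.1 = p₁.1) by
    rcases this with ⟨hx, hstep⟩ | ⟨hx, heq⟩
    · rw [projD_singleton_of_inL hx]
      exact w_singleton.mpr ⟨p₁.1, p₂.1, hε₁, hstep, hε₂⟩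
    · rw [projD_singleton_of_not_inL hx]
      exact .nil (hε₁.trans (heq ▸ hε₂))
  cases x with
  | delta =>
    obtain ⟨rfl, hquiescent⟩ := hstep
    exact Or.inl ⟨trivial, rfl, quiescent_fst_of_par he hcomp hquiescent⟩
  | lab ℓ =>
    rcases hstep with ⟨hs, -, hstep, -⟩ | ⟨-, hs, -, heq⟩ | ⟨hs, -, hstep, -⟩
    · exact Or.inl ⟨hs, hstep⟩
    · exact Or.inr ⟨hs, heq⟩
    · exact Or.inl ⟨hs, hstep⟩

theorem w_fst_of_par (he : e.InputEnabled) (hcomp : Composable s e)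
    (h : (par s e).W p σ p') : s.W p.1 (projD σ s.L) p'.1 := by
  induction σ using List.reverseRecOn generalizing p' with
  | nil => exact .nil (eps_fst_of_par (w_nil.mp h))
  | append_singleton σ x ih =>
    obtain ⟨p₁, h₁, hx⟩ := w_append.mp h
    rw [projD_append]
    exact w_append.mpr ⟨p₁.1, ih h₁, w_fst_of_par_singleton he hcomp hx⟩

end Par

end LTS

theorem combine_utrace_imp_general {Qs Qe Lab : Type} {s : LTS Qs Lab} {e : LTS Qe Lab}
    (he : e.InputEnabled) (hcomp : Composable s e)
    {σ : List (ELabel Lab)} (hσ : TraceIn (par s e).L σ)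
    (hσs : projD σ s.L ∈ s.Utraces) (hσe : ∃ b, e.W e.q0 (projD σ e.L) b) :
    σ ∈ (par s e).Utraces := by
  refine ⟨hσ, ?_, ?_⟩
  · obtain ⟨a, ha⟩ := hσs.2.1
    obtain ⟨b, hb⟩ := hσe
    exact ⟨(a, b), LTS.w_par hσ ha hb⟩
  · rintro σ₁ ℓ σ₂ rfl hℓ ⟨a, b⟩ hab
    have ha : s.W s.q0 (projD σ₁ s.L) a := LTS.w_fst_of_par he hcomp hab
    obtain ⟨a', ha'⟩ : ∃ a', s.W a (projD [.lab ℓ] s.L) a' :=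
      LTS.exists_w_projD_singleton fun hℓs =>
        LTS.exists_w_of_projD_mem_utraces hσs (LTS.mem_I_left_of_mem_par_I hℓ hℓs) ha
    obtain ⟨b', hb'⟩ : ∃ b', e.W b (projD [.lab ℓ] e.L) b' :=
      LTS.exists_w_projD_singleton fun hℓe => he b ℓ (LTS.mem_I_right_of_mem_par_I hℓ hℓe)
    exact ⟨(a', b'), LTS.w_par_singleton (x := .lab ℓ) (Or.inl hℓ) ha' hb'⟩

/-- for composable `s` and input-enabled `i_e`, if
`σ↾L_s^δ ∈ Utraces(s)` and `σ↾L_{i_e}^δ ∈ Utraces(i_e)` then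
`σ ∈ Utraces(s ∥ i_e)`. -/
theorem combine_utrace_imp {Qs Qie Lab : Type}
    (s : LTS Qs Lab) (iE : LTS Qie Lab)
    (hs : s.WellFormed) (hiE : iE.WellFormed)
    (hiEenabled : iE.InputEnabled)
    (hcomp : Composable s iE)
    (σ : List (ELabel Lab)) (hσ : TraceIn (par s iE).L σ)
    (h1 : projD σ s.L ∈ s.Utraces) (h2 : projD σ iE.L ∈ iE.Utraces) :
    σ ∈ (par s iE).Utraces :=
  combine_utrace_imp_general hiEenabled hcomp hσ h1 h2.2.1
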